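/- Let μ be a weak Gibbs measure for an asymptotically additive sequence Φ = (φ_n)_n on a topologically mixing one-sided subshift of finite type (Σ,σ), and define ψ_n : Σ → ℝ by ψ_n(ω) := log μ(C_{i₁…i_n}) for ω ∈ C_{i₁…i_n}. Then the topological pressure of the sequence Ψ = (ψ_n)_n is zero: P(Ψ) = 0. -/

import Mathlib

open MeasureTheory Filter Topology Set

namespace WG

/-- The one-sided subshift of finite type determined by a 0-1 transition matrix `M`. -/
abbrev Space {k : ℕ} (M : Matrix (Fin k) (Fin k) ℕ) : Type :=
  {ω : ℕ → Fin k // ∀ i : ℕ, M (ω i) (ω (i + 1)) = 1}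

variable {k : ℕ}

/-- The shift map on the subshift. -/
def shift (M : Matrix (Fin k) (Fin k) ℕ) (ω : Space M) : Space M :=
  ⟨fun i => ω.1 (i + 1), fun i => ω.2 (i + 1)⟩

/-- `M` is a 0-1 matrix and the subshift is topologically mixing:
some power of `M` has all entries strictly positive. -/
def Mixing (M : Matrix (Fin k) (Fin k) ℕ) : Prop :=
  (∀ i j, M i j = 0 ∨ M i j = 1) ∧ ∃ l : ℕ, 0 < l ∧ ∀ i j, 0 < (M ^ l) i j

/-- The cylinder `C_{w₀ … w_{n-1}}`. -/
def cyl (M : Matrix (Fin k) (Fin k) ℕ) (n : ℕ) (w : Fin n → Fin k) : Set (Space M) :=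
  {ω | ∀ j : Fin n, ω.1 j.1 = w j}

/-- The initial word of length `n` of a point `ω`. -/
def word (M : Matrix (Fin k) (Fin k) ℕ) (n : ℕ) (ω : Space M) : Fin n → Fin k :=
  fun j => ω.1 j.1

/-- Birkhoff sums `S_n f`. -/
noncomputable def birk (M : Matrix (Fin k) (Fin k) ℕ) (f : Space M → ℝ) (n : ℕ)
    (ω : Space M) : ℝ :=
  ∑ j ∈ Finset.range n, f ((shift M)^[j] ω)

/-- The standard metric `d(ω,κ) = ∑ᵢ |ωᵢ - κᵢ| / 2^{i+1}` on the shift space. -/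
noncomputable def dist' (M : Matrix (Fin k) (Fin k) ℕ) (ω κ : Space M) : ℝ :=
  ∑' i : ℕ, |((ω.1 i : ℕ) : ℝ) - ((κ.1 i : ℕ) : ℝ)| / 2 ^ (i + 1)

/-- `E` is an `(n,ε)`-separated set. -/
def IsSep (M : Matrix (Fin k) (Fin k) ℕ) (n : ℕ) (ε : ℝ) (E : Finset (Space M)) : Prop :=
  ∀ ω ∈ E, ∀ κ ∈ E, ω ≠ κ → ∃ i < n, ε < dist' M ((shift M)^[i] ω) ((shift M)^[i] κ)

/-- `P(Φ, n, ε)`: supremum of `∑_{ω ∈ E} exp(φ_n ω)` over `(n,ε)`-separated sets `E`. -/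
noncomputable def sepSum (M : Matrix (Fin k) (Fin k) ℕ) (Φ : ℕ → Space M → ℝ)
    (n : ℕ) (ε : ℝ) : ℝ :=
  sSup {s | ∃ E : Finset (Space M), IsSep M n ε E ∧ s = ∑ ω ∈ E, Real.exp (Φ n ω)}

/-- `P` is the topological pressure of the sequence `Φ`:
`P = lim_{ε→0⁺} limsup_n (1/n) log P(Φ,n,ε)`. -/
def IsPressure (M : Matrix (Fin k) (Fin k) ℕ) (Φ : ℕ → Space M → ℝ) (P : ℝ) : Prop :=
  Tendsto (fun ε : ℝ => limsup (fun n : ℕ => Real.log (sepSum M Φ n ε) / n) atTop)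
    (𝓝[>] (0 : ℝ)) (𝓝 P)

/-- The sequence `Φ = (φ_n)` is asymptotically additive. -/
def AsympAdd (M : Matrix (Fin k) (Fin k) ℕ) (Φ : ℕ → Space M → ℝ) : Prop :=
  (∀ n, Continuous (Φ n)) ∧
  ∀ ε > (0 : ℝ), ∃ ρ : Space M → ℝ, Continuous ρ ∧
    limsup (fun n : ℕ => (⨆ ω : Space M, |Φ n ω - birk M ρ n ω|) / n) atTop < ε

/-- `μ` is a weak Gibbs measure for the sequence `Φ` with constant `P`. -/
def WeakGibbs (M : Matrix (Fin k) (Fin k) ℕ) (Φ : ℕ → Space M → ℝ) (P : ℝ)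
    (μ : Measure (Space M)) : Prop :=
  ∃ K : ℕ → ℝ, (∀ n, 0 < K n) ∧ Tendsto (fun n : ℕ => Real.log (K n) / n) atTop (𝓝 0) ∧
    ∀ n : ℕ, ∀ w : Fin n → Fin k, ∀ ω ∈ cyl M n w,
      1 / K n ≤ (μ (cyl M n w)).toReal / Real.exp (Φ n ω - n * P) ∧
      (μ (cyl M n w)).toReal / Real.exp (Φ n ω - n * P) ≤ K n

/-- `μ` is a Gibbs measure for the sequence `Φ` with constant `P`. -/
def Gibbs (M : Matrix (Fin k) (Fin k) ℕ) (Φ : ℕ → Space M → ℝ) (P : ℝ)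
    (μ : Measure (Space M)) : Prop :=
  ∃ K : ℝ, 0 < K ∧
    ∀ n : ℕ, ∀ w : Fin n → Fin k, ∀ ω ∈ cyl M n w,
      1 / K ≤ (μ (cyl M n w)).toReal / Real.exp (Φ n ω - n * P) ∧
      (μ (cyl M n w)).toReal / Real.exp (Φ n ω - n * P) ≤ K

/-- Sum of `exp(φ_n ω)` over points of period `n`. -/
noncomputable def perSum (M : Matrix (Fin k) (Fin k) ℕ) (Φ : ℕ → Space M → ℝ) (n : ℕ) : ℝ :=
  ∑' ω : {ω : Space M // (shift M)^[n] ω = ω}, Real.exp (Φ n ω.1)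

/-- `var_n(g)`: the variation of `g` over cylinders of length `n`. -/
noncomputable def varCyl (M : Matrix (Fin k) (Fin k) ℕ) (n : ℕ) (g : Space M → ℝ) : ℝ :=
  sSup {x | ∃ ω κ : Space M, (∀ j : Fin n, ω.1 j.1 = κ.1 j.1) ∧ x = |g ω - g κ|}

open Classical in
/-- `∑_{C ∈ Z_n} exp (sup_C S_n φ)`: the cylinder partition sum of `φ`. -/
noncomputable def cylSum (M : Matrix (Fin k) (Fin k) ℕ) (φ : Space M → ℝ) (n : ℕ) : ℝ :=
  ∑ w ∈ Finset.univ.filter (fun w : Fin n → Fin k => (cyl M n w).Nonempty),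
    Real.exp (sSup (birk M φ n '' cyl M n w))

end WG

namespace WG

lemma shift_iter {k : ℕ} (M : Matrix (Fin k) (Fin k) ℕ) (i : ℕ) :
    ∀ (ω : Space M) (j : ℕ), ((shift M)^[i] ω).1 j = ω.1 (j + i) := by
  induction i with
  | zero => intro ω j; rfl
  | succ i ih =>
    intro ω j
    rw [Function.iterate_succ_apply, ih]
    show ω.1 (j + i + 1) = _
    rfl

lemma term_le {k : ℕ} (M : Matrix (Fin k) (Fin k) ℕ) (ω κ : Space M) (i : ℕ) :
    |((ω.1 i : ℕ) : ℝ) - ((κ.1 i : ℕ) : ℝ)| ≤ k := by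
  have h1 : ((ω.1 i : ℕ) : ℝ) ≤ k := by exact_mod_cast (ω.1 i).2.le
  have h2 : ((κ.1 i : ℕ) : ℝ) ≤ k := by exact_mod_cast (κ.1 i).2.le
  have h3 : (0 : ℝ) ≤ ((ω.1 i : ℕ) : ℝ) := Nat.cast_nonneg _
  have h4 : (0 : ℝ) ≤ ((κ.1 i : ℕ) : ℝ) := Nat.cast_nonneg _
  rw [abs_le]; constructor <;> linarith

lemma geo_eq (c : ℝ) (i : ℕ) : c / 2 ^ (i + 1) = c / 2 / 2 ^ i := by
  rw [pow_succ]; field_simp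

lemma dist_summable {k : ℕ} (M : Matrix (Fin k) (Fin k) ℕ) (ω κ : Space M) :
    Summable (fun i : ℕ => |((ω.1 i : ℕ) : ℝ) - ((κ.1 i : ℕ) : ℝ)| / 2 ^ (i + 1)) := by
  refine Summable.of_nonneg_of_le (fun i => by positivity) (fun i => ?_)
    (summable_geometric_two' (k : ℝ))
  rw [← geo_eq]
  gcongr
  exact term_le M ω κ i

lemma dist_le {k : ℕ} (M : Matrix (Fin k) (Fin k) ℕ) (ω κ : Space M) (m : ℕ)
    (h : ∀ i < m, ω.1 i = κ.1 i) : dist' M ω κ ≤ k / 2 ^ m := by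
  have hs := dist_summable M ω κ
  unfold dist'
  rw [← hs.sum_add_tsum_nat_add m]
  rw [Finset.sum_eq_zero (fun i hi => by rw [h i (Finset.mem_range.1 hi)]; simp), zero_add]
  rw [← tsum_geometric_two' ((k : ℝ) / 2 ^ m)]
  refine Summable.tsum_le_tsum (fun i => ?_) ((summable_nat_add_iff m).2 hs)
    (summable_geometric_two' _)
  have : (k : ℝ) / 2 ^ m / 2 / 2 ^ i = k / 2 ^ (i + m + 1) := by
    rw [pow_succ, pow_add]; field_simp
  rw [this]
  gcongr
  exact term_le M ω κ _

lemma le_dist {k : ℕ} (M : Matrix (Fin k) (Fin k) ℕ) (ω κ : Space M)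
    (h : ω.1 0 ≠ κ.1 0) : 1 / 2 ≤ dist' M ω κ := by
  have hs := dist_summable M ω κ
  have h0 := hs.le_tsum 0 (fun i _ => by positivity)
  refine le_trans ?_ h0
  have h1 : ((ω.1 0 : ℕ) : ℤ) - ((κ.1 0 : ℕ) : ℤ) ≠ 0 := by
    intro h2
    apply h
    ext
    omega
  have h2 : (1 : ℝ) ≤ |((ω.1 0 : ℕ) : ℝ) - ((κ.1 0 : ℕ) : ℝ)| := by
    exact_mod_cast Int.one_le_abs h1
  simp only [zero_add, pow_one]
  linarith

lemma cyl_eq {k : ℕ} (M : Matrix (Fin k) (Fin k) ℕ) (n : ℕ) (w : Fin n → Fin k) :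
    cyl M n w = word M n ⁻¹' {w} := by
  ext ω
  simp [cyl, word, funext_iff]

lemma sum_cyl {k : ℕ} (M : Matrix (Fin k) (Fin k) ℕ) (μ : Measure (Space M))
    [IsProbabilityMeasure μ] (n : ℕ) :
    ∑ w : Fin n → Fin k, (μ (cyl M n w)).toReal = 1 := by
  have hw : Measurable (word M n) := by
    refine measurable_pi_lambda _ (fun j => ?_)
    exact (measurable_pi_apply _).comp measurable_subtype_coe
  rw [← ENNReal.toReal_sum (fun w _ => measure_ne_top μ _)]
  simp only [cyl_eq]
  rw [sum_measure_preimage_singleton _ (fun y _ => hw (measurableSet_singleton y))]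
  simp

lemma sep_upper {k : ℕ} (M : Matrix (Fin k) (Fin k) ℕ) (μ : Measure (Space M))
    [IsProbabilityMeasure μ] (n m : ℕ) (ε : ℝ) (hm : (k : ℝ) / 2 ^ m ≤ ε)
    (E : Finset (Space M)) (hE : IsSep M n ε E) :
    ∑ ω ∈ E, (μ (cyl M n (word M n ω))).toReal ≤ (k : ℝ) ^ m := by
  classical
  let g : Space M → (Fin n → Fin k) × (Fin m → Fin k) :=
    fun ω => (word M n ω, fun j => ω.1 (n + j))
  have hinj : Set.InjOn g E := by
    intro ω hω κ hκ h
    by_contra hne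
    obtain ⟨i, hi, hd⟩ := hE ω hω κ hκ hne
    have hag : ∀ j < n + m, ω.1 j = κ.1 j := by
      intro j hj
      rcases lt_or_ge j n with hjn | hjn
      · exact congrFun (congrArg Prod.fst h) ⟨j, hjn⟩
      · have := congrFun (congrArg Prod.snd h) ⟨j - n, by omega⟩
        simpa [g, Nat.add_sub_cancel' hjn] using this
    have := dist_le M ((shift M)^[i] ω) ((shift M)^[i] κ) m (fun j hj => by
      rw [shift_iter, shift_iter]; exact hag _ (by omega))
    linarith
  calc ∑ ω ∈ E, (μ (cyl M n (word M n ω))).toReal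
      = ∑ p ∈ E.image g, (μ (cyl M n p.1)).toReal := by
        rw [Finset.sum_image hinj]
    _ ≤ ∑ p : (Fin n → Fin k) × (Fin m → Fin k), (μ (cyl M n p.1)).toReal :=
        Finset.sum_le_sum_of_subset_of_nonneg (Finset.subset_univ _)
          (fun _ _ _ => ENNReal.toReal_nonneg)
    _ = (k : ℝ) ^ m := by
        rw [Fintype.sum_prod_type]
        simp only [Finset.sum_const, nsmul_eq_mul]
        rw [← Finset.mul_sum, sum_cyl]
        simp

lemma sep_lower {k : ℕ} (M : Matrix (Fin k) (Fin k) ℕ) (μ : Measure (Space M))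
    [IsProbabilityMeasure μ] (n : ℕ) (ε : ℝ) (hε : ε < 1 / 2) :
    ∃ E : Finset (Space M), IsSep M n ε E ∧
      ∑ ω ∈ E, (μ (cyl M n (word M n ω))).toReal = 1 := by
  classical
  have hne : Nonempty (Space M) := nonempty_of_isProbabilityMeasure μ
  let g : (Fin n → Fin k) → Space M := Function.invFun (word M n)
  let W : Finset (Fin n → Fin k) := Finset.univ.filter (fun w => ∃ ω, word M n ω = w)
  have hg : ∀ w ∈ W, word M n (g w) = w := by
    intro w hw
    exact Function.invFun_eq (Finset.mem_filter.1 hw).2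
  have hinj : Set.InjOn g W := by
    intro w hw v hv h
    rw [← hg w hw, ← hg v hv, h]
  refine ⟨W.image g, ?_, ?_⟩
  · intro ω hω κ hκ hne
    obtain ⟨w, hw, rfl⟩ := Finset.mem_image.1 hω
    obtain ⟨v, hv, rfl⟩ := Finset.mem_image.1 hκ
    have hwv : word M n (g w) ≠ word M n (g v) := by
      rw [hg w hw, hg v hv]; rintro rfl; exact hne rfl
    obtain ⟨j, hj⟩ := Function.ne_iff.1 hwv
    refine ⟨j.1, j.2, lt_of_lt_of_le hε (le_dist M _ _ ?_)⟩
    rw [shift_iter, shift_iter, zero_add]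
    exact hj
  · rw [Finset.sum_image hinj, Finset.sum_congr rfl (fun w hw => by rw [hg w hw]),
      ← sum_cyl M μ n]
    refine Finset.sum_subset (Finset.subset_univ _) (fun w _ hw => ?_)
    have : cyl M n w = ∅ := by
      rw [cyl_eq]
      ext ω
      simp only [Set.mem_preimage, Set.mem_singleton_iff, Set.mem_empty_iff_false, iff_false]
      intro h
      exact hw (Finset.mem_filter.2 ⟨Finset.mem_univ _, ω, h⟩)
    simp [this]

end WG

open WG in
/-- with `ψ_n(ω) = log μ(C_{i₁…i_n})` for a weak Gibbs measure `μ` of an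
asymptotically additive sequence `Φ` on a topologically mixing subshift of finite type,
the topological pressure of `Ψ = (ψ_n)` is zero. -/
theorem psi_pressure_zero
    {k : ℕ} (M : Matrix (Fin k) (Fin k) ℕ) (hmix : Mixing M)
    (Φ : ℕ → Space M → ℝ) (hΦ : AsympAdd M Φ) (P : ℝ) (hP : IsPressure M Φ P)
    (μ : Measure (Space M)) (hμ : IsProbabilityMeasure μ)
    (hwg : WeakGibbs M Φ P μ)
    (Ψ : ℕ → Space M → ℝ)
    (hΨ : ∀ n : ℕ, ∀ ω : Space M, Ψ n ω = Real.log ((μ (cyl M n (word M n ω))).toReal)) :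
    IsPressure M Ψ 0 := by
  have hexp : ∀ n ω, Real.exp (Ψ n ω) = (μ (cyl M n (word M n ω))).toReal := by
    intro n ω
    obtain ⟨K, hK, -, hG⟩ := hwg
    have h1 := (hG n (word M n ω) ω (fun _ => rfl)).1
    have h2 : 0 < (μ (cyl M n (word M n ω))).toReal / Real.exp (Φ n ω - n * P) :=
      lt_of_lt_of_le (one_div_pos.2 (hK n)) h1
    have h3 := (div_pos_iff_of_pos_right (Real.exp_pos _)).1 h2
    rw [hΨ, Real.exp_log h3]
  unfold IsPressure
  refine Tendsto.congr' (f₁ := fun _ => (0 : ℝ)) ?_ tendsto_const_nhds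
  have hev : ∀ᶠ ε : ℝ in 𝓝[>] (0 : ℝ), ε ∈ Set.Ioo (0 : ℝ) (1 / 2) :=
    Ioo_mem_nhdsGT (by norm_num)
  filter_upwards [hev] with ε hε
  symm
  apply Tendsto.limsup_eq
  obtain ⟨m, hm⟩ : ∃ m : ℕ, (k : ℝ) / 2 ^ m ≤ ε := by
    obtain ⟨m, hm⟩ := pow_unbounded_of_one_lt ((k : ℝ) / ε) (one_lt_two)
    refine ⟨m, ?_⟩
    rw [div_lt_iff₀ hε.1] at hm
    rw [div_le_iff₀ (by positivity)]
    linarith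
  have hub : ∀ n, ∀ s ∈ {s | ∃ E : Finset (Space M), IsSep M n ε E ∧
      s = ∑ ω ∈ E, Real.exp (Ψ n ω)}, s ≤ (k : ℝ) ^ m := by
    rintro n s ⟨E, hE, rfl⟩
    simp only [hexp]
    exact sep_upper M μ n m ε hm E hE
  have hlo : ∀ n, 1 ≤ sepSum M Ψ n ε := by
    intro n
    obtain ⟨E, hE, h1⟩ := sep_lower M μ n ε hε.2
    exact le_csSup ⟨_, hub n⟩ ⟨E, hE, by simp only [hexp]; exact h1.symm⟩
  have hup : ∀ n, sepSum M Ψ n ε ≤ (k : ℝ) ^ m := by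
    intro n
    obtain ⟨E, hE, h1⟩ := sep_lower M μ n ε hε.2
    exact csSup_le ⟨_, E, hE, rfl⟩ (hub n)
  refine squeeze_zero (g := fun n : ℕ => Real.log ((k : ℝ) ^ m) / n) (fun n => ?_) (fun n => ?_)
    (tendsto_const_div_atTop_nhds_zero_nat _)
  · exact div_nonneg (Real.log_nonneg (hlo n)) (Nat.cast_nonneg _)
  · have := hlo n
    have := hup n
    gcongr
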